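/- arXiv:0711.3030 — 3 statements merged into one kernel-verified Lean document; each statement's English description precedes it below -/
import Mathlib

section
/- If λ = χ⁺ = 2^χ > ℵ₁ and S ⊆ λ is a stationary set such that cf(δ) ≠ cf(χ) for every δ ∈ S, then ◊_S holds. -/
open Ordinal Set Cardinal

/-- `C` is a closed unbounded subset of the ordinal `o`. -/
def IsClubIn (o : Ordinal.{0}) (C : Set Ordinal) : Prop :=
  C ⊆ Set.Iio o ∧ (∀ a < o, ∃ b ∈ C, a ≤ b) ∧
  ∀ a < o, (C ∩ Set.Iio a).Nonempty → sSup (C ∩ Set.Iio a) = a → a ∈ C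

/-- `S` is a stationary subset of the ordinal `o`. -/
def IsStatIn (o : Ordinal.{0}) (S : Set Ordinal) : Prop :=
  S ⊆ Set.Iio o ∧ ∀ C, IsClubIn o C → (S ∩ C).Nonempty

/-- The functional version of the diamond principle on `S ⊆ o`. -/
def DiamondFun (o : Ordinal.{0}) (S : Set Ordinal) : Prop :=
  ∃ g : Ordinal → Ordinal → Ordinal,
    (∀ δ ∈ S, ∀ α < δ, g δ α < δ) ∧
    ∀ f : Ordinal → Ordinal, (∀ α < o, f α < o) →
      IsStatIn o {δ | δ ∈ S ∧ ∀ α < δ, f α = g δ α}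

/-- The set version of the diamond principle on `S ⊆ o`. -/
def DiamondSet (o : Ordinal.{0}) (S : Set Ordinal) : Prop :=
  ∃ A : Ordinal → Set Ordinal,
    (∀ δ ∈ S, A δ ⊆ Set.Iio δ) ∧
    ∀ X, X ⊆ Set.Iio o → IsStatIn o {δ | δ ∈ S ∧ X ∩ Set.Iio δ = A δ}

/-- The diamond-star principle on `S ⊆ o`. -/
def DiamondStar (o : Ordinal.{0}) (S : Set Ordinal) : Prop :=
  ∃ 𝒜 : Ordinal → Set (Set Ordinal),
    (∀ α ∈ S, (∀ X ∈ 𝒜 α, X ⊆ Set.Iio α) ∧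
        Cardinal.mk ↥(𝒜 α) ≤ Cardinal.lift.{1} α.card) ∧
    ∀ X, X ⊆ Set.Iio o → ∃ C, IsClubIn o C ∧ ∀ α ∈ C ∩ S, X ∩ Set.Iio α ∈ 𝒜 α

/-- `D` is a (proper) filter on the set of ordinals below `o`. -/
def IsFilterOn (o : Ordinal.{0}) (D : Set (Set Ordinal.{0})) : Prop :=
  (∀ A ∈ D, A ⊆ Set.Iio o) ∧ Set.Iio o ∈ D ∧ ∅ ∉ D ∧
  (∀ A ∈ D, ∀ B, B ⊆ Set.Iio o → A ⊆ B → B ∈ D) ∧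
  (∀ A ∈ D, ∀ B ∈ D, A ∩ B ∈ D)

/-- `D` extends the club filter on `o`. -/
def ExtendsClubs (o : Ordinal.{0}) (D : Set (Set Ordinal.{0})) : Prop :=
  ∀ C, IsClubIn o C → C ∈ D

/-- `D` is `μ`-complete: closed under intersections of fewer than `μ` members. -/
def CompleteFor (μ : Cardinal.{0}) (o : Ordinal.{0}) (D : Set (Set Ordinal.{0})) : Prop :=
  ∀ β : Ordinal, β.card < μ → ∀ s : Ordinal → Set Ordinal,
    (∀ i < β, s i ∈ D) → (Set.Iio o ∩ ⋂ i ∈ Set.Iio β, s i) ∈ D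

/-- `S` is `D`-positive. -/
def DPos (o : Ordinal.{0}) (D : Set (Set Ordinal.{0})) (S : Set Ordinal) : Prop :=
  S ⊆ Set.Iio o ∧ (Set.Iio o \ S) ∉ D

/-- The filter `D + S`. -/
def DPlus (o : Ordinal.{0}) (D : Set (Set Ordinal.{0})) (S : Set Ordinal) : Set (Set Ordinal) :=
  {B | B ⊆ Set.Iio o ∧ B ∪ (Set.Iio o \ S) ∈ D}

/-- The diamond principle for a filter `D` on `o`. -/
def DiamondFilter (o : Ordinal.{0}) (D : Set (Set Ordinal.{0})) : Prop :=
  ∃ S : Set Ordinal, DPos o D S ∧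
    ∃ f : Ordinal → Ordinal → Ordinal,
      (∀ α ∈ S, ∀ β < α, f α β < o) ∧
      ∀ g : Ordinal → Ordinal, (∀ α < o, g α < o) →
        DPos o D {α | α ∈ S ∧ ∀ β < α, g β = f α β}

/-- `λ = o` has strong non-reflection for `S` in `κ`. -/
def SNR (o : Ordinal.{0}) (S : Set Ordinal) (κ : Cardinal.{0}) : Prop :=
  ∃ h : Ordinal → Ordinal, (∀ α < o, h α < κ.ord) ∧
    ∃ E, IsClubIn o E ∧ ∀ δ ∈ S ∩ E, ∃ C, IsClubIn δ C ∧ StrictMonoOn h C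


namespace ShelahDiamond

/-- Fewer than `cof c` many ordinals below `c` have a strict upper bound below `c`. -/
theorem bnd {ι : Type} {c : Ordinal.{0}} (f : ι → Ordinal.{0}) (hι : #ι < c.cof)
    (hf : ∀ i, f i < c) : ∃ b < c, ∀ i, f i < b := by
  have hb : ∀ i, f i < ⨆ j, (f j + 1) := fun i =>
    lt_of_lt_of_le (lt_add_one (f i)) (Ordinal.le_iSup (fun j => f j + 1) i)
  exact ⟨_, Ordinal.iSup_add_one_lt_of_lt_cof hι hf, hb⟩

/-- A cofinal family of length `cof c`. -/
theorem exCof (c : Ordinal.{0}) : ∃ (ι : Type) (f : ι → Ordinal.{0}), #ι = c.cof ∧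
    (∀ i, f i < c) ∧ ∀ a < c, ∃ i, a ≤ f i := by
  obtain ⟨s, hs, hc⟩ := Order.exists_cof_eq c.ToType
  refine ⟨s, fun i => (Ordinal.ToType.mk.symm i.1).1, by rw [hc, Ordinal.cof_toType],
    fun i => (Ordinal.ToType.mk.symm i.1).2, fun a ha => ?_⟩
  obtain ⟨b, hb, hab⟩ := hs (Ordinal.ToType.mk ⟨a, ha⟩)
  refine ⟨⟨b, hb⟩, ?_⟩
  have := (OrderIso.le_symm_apply Ordinal.ToType.mk).2 hab
  exact this

/-- Closure points of a function form a club. -/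
theorem club_closed {o : Ordinal.{0}} (ho : ℵ₀ < o.cof) (hreg : ∀ a < o, a.card < o.cof)
    (H : Ordinal.{0} → Ordinal.{0}) (hH : ∀ a < o, H a < o) :
    IsClubIn o {δ | δ < o ∧ 0 < δ ∧ ∀ a < δ, H a < δ} := by
  have hlim : Order.IsSuccLimit o := Ordinal.aleph0_le_cof.1 ho.le
  refine ⟨fun x hx => hx.1, fun a ha => ?_, fun a ha hne hsup => ?_⟩
  · have hG : ∀ a < o, ∃ b < o, a < b ∧ ∀ x < a, H x < b := by
      intro a ha
      obtain ⟨b, hb, hb'⟩ := bnd (c := o) (fun x : a.ToType => H (Ordinal.ToType.mk.symm x).1)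
        (by simpa using hreg a ha)
        (fun x => hH _ (lt_trans (Ordinal.ToType.mk.symm x).2 ha))
      refine ⟨max b (Order.succ a), max_lt hb (hlim.succ_lt ha),
        lt_max_of_lt_right (Order.lt_succ a), fun x hx => lt_max_of_lt_left ?_⟩
      have := hb' (Ordinal.ToType.mk ⟨x, hx⟩)
      simpa using this
    choose! G hG1 hG2 hG3 using hG
    have hlt : Ordinal.nfp G a < o := Ordinal.nfp_lt_ord ho hG1 ha
    have hit : ∀ n, G^[n] a < o := fun n =>
      lt_of_le_of_lt (Ordinal.iterate_le_nfp G a n) hlt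
    refine ⟨Ordinal.nfp G a, ⟨hlt, ?_, ?_⟩, Ordinal.le_nfp G a⟩
    · refine lt_of_lt_of_le (lt_of_le_of_lt zero_le (hG2 a ha)) (Ordinal.iterate_le_nfp G a 1)
    · intro x hx
      obtain ⟨n, hn⟩ := Ordinal.lt_nfp_iff.1 hx
      refine lt_of_lt_of_le (hG3 _ (hit n) x hn) ?_
      have := Ordinal.iterate_le_nfp G a (n+1)
      rwa [Function.iterate_succ_apply'] at this
  · refine ⟨ha, ?_, ?_⟩
    · obtain ⟨x, hx, hxa⟩ := hne
      exact hx.2.1.trans hxa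
    · intro x hx
      rw [← hsup] at hx
      obtain ⟨y, hy, hxy⟩ := exists_lt_of_lt_csSup hne hx
      exact (hy.1.2.2 x hxy).trans hy.2

theorem club_fun {o : Ordinal.{0}} (ho : Order.IsSuccLimit o) {D : Set Ordinal.{0}}
    (hD : IsClubIn o D) :
    ∃ h : Ordinal.{0} → Ordinal.{0}, (∀ a < o, h a < o) ∧
      ∀ δ < o, 0 < δ → (∀ a < δ, h a < δ) → δ ∈ D := by
  have : ∀ a < o, ∃ b < o, b ∈ D ∧ a < b := by
    intro a ha
    obtain ⟨b, hb, hab⟩ := hD.2.1 _ (ho.succ_lt ha)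
    exact ⟨b, hD.1 hb, hb, Order.succ_le_iff.1 hab⟩
  choose! h h1 h2 h3 using this
  refine ⟨h, h1, fun δ hδ h0 hc => hD.2.2 δ hδ ⟨h 0, h2 0 (h0.trans hδ), hc 0 h0⟩ ?_⟩
  apply le_antisymm
  · exact csSup_le' fun x hx => le_of_lt hx.2
  · by_contra hlt
    push Not at hlt
    have hs := hc _ hlt
    have : h (sSup (D ∩ Iio δ)) ≤ sSup (D ∩ Iio δ) :=
      le_csSup ⟨δ, fun x hx => le_of_lt hx.2⟩ ⟨h2 _ (hlt.trans hδ), hs⟩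
    exact absurd (h3 _ (hlt.trans hδ)) (not_lt.2 this)

theorem card_le_of_lt {χ : Cardinal.{0}} {a : Ordinal.{0}} (h : a < (Order.succ χ).ord) :
    a.card ≤ χ := Order.lt_succ_iff.1 (Cardinal.lt_ord.1 h)

/-- Injections of `δ × δ` into `χ`. -/
theorem exPair (χ : Cardinal.{0}) (hχ : ℵ₀ ≤ χ) (δ : Ordinal.{0})
    (hδ : δ < (Order.succ χ).ord) :
    ∃ e : Ordinal.{0} → Ordinal.{0} → Ordinal.{0},
      (∀ a < δ, ∀ b < δ, e a b < χ.ord) ∧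
      ∀ a < δ, ∀ b < δ, ∀ a' < δ, ∀ b' < δ, e a b = e a' b' → a = a' ∧ b = b' := by
  have h1 : #(δ.ToType × δ.ToType) ≤ #(χ.ord.ToType) := by
    have := card_le_of_lt hδ
    simp only [Cardinal.mk_prod, Cardinal.lift_id, Cardinal.mk_toType, Cardinal.card_ord]
    exact (mul_le_mul' this this).trans (Cardinal.mul_eq_self hχ).le
  obtain ⟨φ⟩ := h1
  classical
  refine ⟨fun a b => if h : a < δ ∧ b < δ then
    (Ordinal.ToType.mk.symm (φ (Ordinal.ToType.mk ⟨a, h.1⟩, Ordinal.ToType.mk ⟨b, h.2⟩))).1 else 0,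
    ?_, ?_⟩
  · intro a ha b hb
    simp only [ha, hb, and_self, dite_true]
    exact (Ordinal.ToType.mk.symm _).2
  · intro a ha b hb a' ha' b' hb' h
    simp only [ha, hb, ha', hb', and_self, dite_true] at h
    have h' := Ordinal.ToType.mk.symm.injective (Subtype.ext h)
    have hpq := φ.injective h'
    simp only [Prod.mk.injEq, EmbeddingLike.apply_eq_iff_eq] at hpq
    exact ⟨congrArg Subtype.val hpq.1, congrArg Subtype.val hpq.2⟩

/-- Coding of matrices of bounded functions by ordinals below `χ⁺`. -/
theorem exCode (χ : Cardinal.{0}) (hχ : ℵ₀ ≤ χ) (h2 : (2 : Cardinal.{0}) ^ χ = Order.succ χ)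
    (a : Ordinal.{0}) (ha : a < (Order.succ χ).ord) :
    ∃ dec : Ordinal.{0} → Ordinal.{0} → Ordinal.{0} → Ordinal.{0} → Ordinal.{0},
      ∀ Z : Ordinal.{0} → Ordinal.{0} → Ordinal.{0} → Ordinal.{0},
        (∀ i < χ.ord, ∀ t < χ.ord, ∀ x < (Order.succ χ).ord, Z i t x < (Order.succ χ).ord) →
        ∃ b < (Order.succ χ).ord, ∀ i < χ.ord, ∀ t < χ.ord, ∀ x < a, dec b i t x = Z i t x := by
  classical
  set o := (Order.succ χ).ord with ho
  set c := χ.ord with hc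
  have hK : #(c.ToType × c.ToType × a.ToType → o.ToType) ≤ #(o.ToType) := by
    have := card_le_of_lt ha
    simp only [Cardinal.mk_pi, Cardinal.prod_const, Cardinal.mk_prod, Cardinal.lift_id,
      Cardinal.mk_toType, ho, hc, Cardinal.card_ord]
    rw [← h2, ← Cardinal.power_mul]
    refine Cardinal.power_le_power_left two_ne_zero ?_
    calc χ * (χ * (χ * a.card)) ≤ χ * (χ * (χ * χ)) := by gcongr
      _ = χ := by simp [Cardinal.mul_eq_self hχ]
  obtain ⟨φ⟩ := hK
  refine ⟨fun b i t x => if h : ∃ k : c.ToType × c.ToType × a.ToType → o.ToType,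
      b = (Ordinal.ToType.mk.symm (φ k)).1 then
      if h' : i < c ∧ t < c ∧ x < a then
        (Ordinal.ToType.mk.symm (h.choose (Ordinal.ToType.mk ⟨i, h'.1⟩,
          Ordinal.ToType.mk ⟨t, h'.2.1⟩, Ordinal.ToType.mk ⟨x, h'.2.2⟩))).1
      else 0 else 0, ?_⟩
  intro Z hZ
  let k : c.ToType × c.ToType × a.ToType → o.ToType := fun p =>
    Ordinal.ToType.mk ⟨Z (Ordinal.ToType.mk.symm p.1).1 (Ordinal.ToType.mk.symm p.2.1).1
      (Ordinal.ToType.mk.symm p.2.2).1, hZ _ (Ordinal.ToType.mk.symm p.1).2 _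
      (Ordinal.ToType.mk.symm p.2.1).2 _ (lt_trans (Ordinal.ToType.mk.symm p.2.2).2 ha)⟩
  refine ⟨(Ordinal.ToType.mk.symm (φ k)).1, (Ordinal.ToType.mk.symm (φ k)).2, ?_⟩
  intro i hi t ht x hx
  have h : ∃ k' : c.ToType × c.ToType × a.ToType → o.ToType,
      (Ordinal.ToType.mk.symm (φ k)).1 = (Ordinal.ToType.mk.symm (φ k')).1 := ⟨k, rfl⟩
  have hk : h.choose = k := by
    have := h.choose_spec
    exact (φ.injective (Ordinal.ToType.mk.symm.injective (Subtype.ext this))).symm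
  refine (dif_pos h).trans ((dif_pos ⟨hi, ht, hx⟩).trans ?_)
  rw [hk]
  simp [k]

/-- If `cof δ ≠ cof c`, a function from `δ` to `c` is bounded on a cofinal set. -/
theorem exCofinalBdd {c δ : Ordinal.{0}} (hc : Order.IsSuccLimit c) (hne : δ.cof ≠ c.cof)
    (v : Ordinal.{0} → Ordinal.{0}) (hv : ∀ a < δ, v a < c) :
    ∃ i < c, ∀ b < δ, ∃ a < δ, b ≤ a ∧ v a < i := by
  rcases lt_or_gt_of_ne hne with h | h
  · obtain ⟨ι, f, hι, hf, hf'⟩ := exCof δ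
    obtain ⟨i, hi, hi'⟩ := bnd (fun j => v (f j)) (hι ▸ h) (fun j => hv _ (hf j))
    refine ⟨i, hi, fun b hb => ?_⟩
    obtain ⟨j, hj⟩ := hf' b hb
    exact ⟨f j, hf j, hj, hi' j⟩
  · by_contra hcon
    push Not at hcon
    obtain ⟨ι, f, hι, hf, hf'⟩ := exCof c
    choose! w hw hw' using hcon
    obtain ⟨b, hb, hb'⟩ := bnd (fun j => w (Order.succ (f j))) (hι ▸ h)
      (fun j => hw _ (hc.succ_lt (hf j)))
    obtain ⟨j, hj⟩ := hf' (v b) (hv b hb)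
    have := hw' _ (hc.succ_lt (hf j)) b hb (hb' j).le
    exact absurd (this.trans hj) (not_le.2 (Order.lt_succ _))

open Classical in
/-- The guess at stage `t`, with respect to previous counterexamples `Zp`. -/
noncomputable def guess (e : Ordinal.{0} → Ordinal.{0} → Ordinal.{0} → Ordinal.{0})
    (dec : Ordinal.{0} → Ordinal.{0} → Ordinal.{0} → Ordinal.{0} → Ordinal.{0} → Ordinal.{0})
    (i t : Ordinal.{0}) (Zp : ∀ s, s < t → Ordinal.{0} → Ordinal.{0})
    (δ x : Ordinal.{0}) : Ordinal.{0} :=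
  if h : ∃ p : Ordinal.{0} × Ordinal.{0}, x < p.1 ∧ p.1 < δ ∧ p.2 < δ ∧ e δ p.1 p.2 < i ∧
      (∀ s, ∀ hs : s < t, ∀ y < p.1, dec p.1 p.2 i s y = Zp s hs y) ∧ dec p.1 p.2 i t x < δ
  then dec h.choose.1 h.choose.2 i t x else 0

end ShelahDiamond

open ShelahDiamond

theorem stmt4 (χ : Cardinal.{0}) (hχ : ℵ₀ ≤ χ) (h2 : (2 : Cardinal.{0}) ^ χ = Order.succ χ)
    (hbig : Cardinal.aleph 1 < Order.succ χ)
    (S : Set Ordinal) (hS : IsStatIn (Order.succ χ).ord S)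
    (hcf : ∀ δ ∈ S, δ.cof ≠ χ.ord.cof) :
    DiamondFun (Order.succ χ).ord S := by
  classical
  by_contra hcon
  set o := (Order.succ χ).ord with ho
  set c := χ.ord with hc
  have hreg : o.cof = Order.succ χ := (Cardinal.isRegular_succ hχ).cof_ord
  have hcof : ℵ₀ < o.cof := by rw [hreg]; exact Order.lt_succ_iff.2 hχ
  have hlim : Order.IsSuccLimit o := Ordinal.aleph0_le_cof.1 hcof.le
  have hclim : Order.IsSuccLimit c := Cardinal.isSuccLimit_ord hχ
  -- the counterexample functions
  have hbad : ∀ g : Ordinal.{0} → Ordinal.{0} → Ordinal.{0}, ∃ f : Ordinal.{0} → Ordinal.{0},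
      ∃ h : Ordinal.{0} → Ordinal.{0}, (∀ δ ∈ S, ∀ α < δ, g δ α < δ) →
      (∀ a < o, f a < o) ∧ (∀ a < o, h a < o) ∧
      ∀ δ ∈ S, 0 < δ → (∀ a < δ, h a < δ) → ∃ a < δ, f a ≠ g δ a := by
    intro g
    by_cases hg : ∀ δ ∈ S, ∀ α < δ, g δ α < δ
    · have : ¬ ∀ f : Ordinal.{0} → Ordinal.{0}, (∀ α < o, f α < o) →
          IsStatIn o {δ | δ ∈ S ∧ ∀ α < δ, f α = g δ α} := fun h => hcon ⟨g, hg, h⟩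
      push Not at this
      obtain ⟨f, hf, hn⟩ := this
      have : ∃ D, IsClubIn o D ∧ ¬ ({δ | δ ∈ S ∧ ∀ α < δ, f α = g δ α} ∩ D).Nonempty := by
        by_contra h
        push Not at h
        exact hn ⟨fun x hx => hS.1 hx.1, h⟩
      obtain ⟨D, hD, hDe⟩ := this
      obtain ⟨h, h1, h2⟩ := club_fun hlim hD
      refine ⟨f, h, fun _ => ⟨hf, h1, fun δ hδ h0 hcl => ?_⟩⟩
      by_contra hh
      push Not at hh
      exact hDe ⟨δ, ⟨hδ, hh⟩, h2 δ (hS.1 hδ) h0 hcl⟩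
    · exact ⟨id, id, fun h => absurd h hg⟩
  choose F Hc hFH using hbad
  have hpair : ∀ δ, δ < o → _ := exPair χ hχ
  choose! e he1 he2 using hpair
  have hcode : ∀ a, a < o → _ := exCode χ hχ h2
  choose! dec hdec using hcode
  -- recursion
  let Z : Ordinal.{0} → Ordinal.{0} → Ordinal.{0} → Ordinal.{0} := fun i =>
    WellFounded.fix (C := fun _ => Ordinal.{0} → Ordinal.{0}) Ordinal.lt_wf
      (fun t Zp => F (guess e dec i t Zp))
  have hZ : ∀ i t, Z i t = F (guess e dec i t (fun s _ => Z i s)) := fun i t =>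
    WellFounded.fix_eq _ _ _
  have hguess : ∀ i t, ∀ δ ∈ S, ∀ α < δ, guess e dec i t (fun s _ => Z i s) δ α < δ := by
    intro i t δ _ α hα
    unfold guess
    split_ifs with h
    · exact h.choose_spec.2.2.2.2.2
    · exact lt_of_le_of_lt zero_le hα
  have hprop := fun i t => hFH _ (hguess i t)
  have hZo : ∀ i t, ∀ a < o, Z i t a < o := by
    intro i t a ha
    rw [hZ]; exact (hprop i t).1 a ha
  -- codes
  have hf : ∀ a, a < o → ∃ b < o, ∀ i < c, ∀ t < c, ∀ x < a, dec a b i t x = Z i t x :=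
    fun a ha => hdec a ha Z (fun i _ t _ => hZo i t)
  choose! f hf1 hf2 using hf
  -- bounding function
  have hcc : #(c.ToType × c.ToType) < o.cof := by
    rw [hreg, Order.lt_succ_iff]
    simp [hc, Cardinal.mul_eq_self hχ]
  have hM : ∀ a, a < o → ∃ m < o, a < m ∧ f a < m ∧ ∀ i < c, ∀ t < c,
      Z i t a < m ∧ Hc (guess e dec i t (fun s _ => Z i s)) a < m := by
    intro a ha
    obtain ⟨m1, hm1, hm1'⟩ := bnd (c := o) (fun p : c.ToType × c.ToType =>
      Z (Ordinal.ToType.mk.symm p.1).1 (Ordinal.ToType.mk.symm p.2).1 a) hcc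
      (fun p => hZo _ _ a ha)
    obtain ⟨G, hG⟩ : ∃ G : Ordinal.{0} → Ordinal.{0} → Ordinal.{0},
        ∀ i t, G i t = Hc (guess e dec i t (fun s _ => Z i s)) a := ⟨_, fun _ _ => rfl⟩
    obtain ⟨m2, hm2, hm2'⟩ := bnd (c := o) (fun p : c.ToType × c.ToType =>
      G (Ordinal.ToType.mk.symm p.1).1 (Ordinal.ToType.mk.symm p.2).1) hcc
      (fun p => by rw [hG]; exact (hprop _ _).2.1 a ha)
    refine ⟨max (max (Order.succ a) (Order.succ (f a))) (max m1 m2),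
      max_lt (max_lt (hlim.succ_lt ha) (hlim.succ_lt (hf1 a ha))) (max_lt hm1 hm2),
      lt_max_of_lt_left (lt_max_of_lt_left (Order.lt_succ _)),
      lt_max_of_lt_left (lt_max_of_lt_right (Order.lt_succ _)), fun i hi t ht => ⟨?_, ?_⟩⟩
    · have := hm1' (Ordinal.ToType.mk ⟨i, hi⟩, Ordinal.ToType.mk ⟨t, ht⟩)
      simp only [OrderIso.symm_apply_apply] at this
      exact lt_max_of_lt_right (lt_max_of_lt_left this)
    · have := hm2' (Ordinal.ToType.mk ⟨i, hi⟩, Ordinal.ToType.mk ⟨t, ht⟩)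
      simp only [OrderIso.symm_apply_apply] at this
      rw [hG] at this
      exact lt_max_of_lt_right (lt_max_of_lt_right this)
  choose! M hM1 hM2 hM3 hM4 using hM
  obtain ⟨δ, hδS, hδo, hδ0, hδM⟩ := hS.2 _ (club_closed hcof
    (fun a ha => by rw [hreg]; exact Cardinal.lt_ord.1 ha) M hM1)
  have hδf : ∀ a < δ, f a < δ := fun a ha => (hM3 a (ha.trans hδo)).trans (hδM a ha)
  obtain ⟨i, hi, hicof⟩ := exCofinalBdd hclim (hcf δ hδS) (fun a => e δ a (f a))
    (fun a ha => he1 δ hδo a ha (f a) (hδf a ha))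
  -- each stage loses an element
  have hlose : ∀ t, t < c → ∃ p : Ordinal.{0} × Ordinal.{0}, p.1 < δ ∧ p.2 < δ ∧
      e δ p.1 p.2 < i ∧ (∀ s < t, ∀ y < p.1, dec p.1 p.2 i s y = Z i s y) ∧
      ¬ ∀ y < p.1, dec p.1 p.2 i t y = Z i t y := by
    intro t ht
    by_contra hno
    push Not at hno
    obtain ⟨x, hx, hxne⟩ := (hprop i t).2.2 δ hδS hδ0
      (fun a ha => ((hM4 a (ha.trans hδo) i hi t ht).2).trans (hδM a ha))
    apply hxne
    rw [← hZ]
    have hex : ∃ p : Ordinal.{0} × Ordinal.{0}, x < p.1 ∧ p.1 < δ ∧ p.2 < δ ∧ e δ p.1 p.2 < i ∧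
      (∀ s, ∀ hs : s < t, ∀ y < p.1, dec p.1 p.2 i s y = (fun s _ => Z i s) s hs y) ∧
        dec p.1 p.2 i t x < δ := by
      obtain ⟨a, ha, hxa, hai⟩ := hicof (M x) (hδM x hx)
      have hxa' : x < a := lt_of_lt_of_le (hM2 x (hx.trans hδo)) hxa
      refine ⟨(a, f a), hxa', ha, hδf a ha, hai, fun s hs y hy =>
        hf2 a (ha.trans hδo) i hi s (hs.trans ht) y hy, ?_⟩
      rw [hf2 a (ha.trans hδo) i hi t ht x hxa']
      exact ((hM4 x (hx.trans hδo) i hi t ht).1).trans (hδM x hx)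
    rw [guess, dif_pos hex]
    obtain ⟨q1, q2, q3, q4, q5, _⟩ := hex.choose_spec
    exact (hno _ q2 q3 q4 q5 x q1).symm
  choose! p hp1 hp2 hp3 hp4 hp5 using hlose
  have hinj : ∀ s < c, ∀ t < c, s < t → p s ≠ p t := by
    intro s hs t ht hst heq
    have := hp4 t ht s hst
    rw [← heq] at this
    exact hp5 s hs this
  have hemb : #(Iio c) ≤ #(Iio i) := by
    refine Cardinal.mk_le_of_injective (f := fun t : Iio c =>
      (⟨e δ (p t.1).1 (p t.1).2, hp3 t.1 t.2⟩ : Iio i)) ?_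
    intro s t hst
    have hst' := he2 δ hδo _ (hp1 s.1 s.2) _ (hp2 s.1 s.2) _ (hp1 t.1 t.2) _ (hp2 t.1 t.2)
      (Subtype.mk.inj hst)
    have heq : p s.1 = p t.1 := Prod.ext hst'.1 hst'.2
    rcases lt_trichotomy s.1 t.1 with h | h | h
    · exact absurd heq (hinj _ s.2 _ t.2 h)
    · exact Subtype.ext h
    · exact absurd heq.symm (hinj _ t.2 _ s.2 h)
  rw [Cardinal.mk_Iio_ordinal, Cardinal.mk_Iio_ordinal, Cardinal.lift_le, hc,
    Cardinal.card_ord] at hemb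
  exact absurd (Cardinal.lt_ord.1 hi) (not_lt.2 hemb)
end

section
/- If λ = χ⁺ = 2^χ, D is a λ-complete filter on λ extending the club filter, S is D-positive, and cf(δ) ≠ cf(χ) for every δ ∈ S, then ◊_{D+S} holds: there is ⟨f_α : α ∈ S'⟩ for some D+S-positive S' with f_α : α → λ such that for every g : λ → λ the set {α : g↾α = f_α} is D+S-positive. -/
open Ordinal Set Cardinal

/-- Maps sending cofinal sets to cofinal sets bound the cofinality. -/
theorem aux_cof_le {α β : Type 1} [Preorder α] [Preorder β] (f : α → β)
    (hf : ∀ T : Set α, IsCofinal T → IsCofinal (f '' T)) : Order.cof β ≤ Order.cof α := by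
  obtain ⟨T, hT, hT'⟩ := Order.exists_cof_eq α
  rw [← hT']
  exact (Order.cof_le (hf T hT)).trans mk_image_le

/-- If `cf δ ≠ cf κ`, every map `δ → κ` is bounded on an unbounded set. -/
theorem aux_unbounded (δ κ : Ordinal.{0}) (hκ : ∀ a < κ, a + 1 < κ) (hne : δ.cof ≠ κ.cof)
    (h : Ordinal.{0} → Ordinal.{0}) (hh : ∀ a < δ, h a < κ) :
    ∃ i < κ, ∀ a < δ, ∃ b, a ≤ b ∧ b < δ ∧ h b < i := by
  by_contra hcon
  push Not at hcon
  choose! a ha hab using hcon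
  apply hne
  have key : Order.cof (Iio δ) = Order.cof (Iio κ) := by
    apply le_antisymm
    · refine aux_cof_le (fun i : Iio κ => (⟨a i, ha i i.2⟩ : Iio δ)) ?_
      intro T hT b
      obtain ⟨t, ht, hbt⟩ := hT ⟨h b + 1, hκ _ (hh b b.2)⟩
      refine ⟨_, ⟨t, ht, rfl⟩, ?_⟩
      by_contra hlt
      have hlt : a t < b := lt_of_not_ge hlt
      have h1 := hab t t.2 b hlt.le b.2
      have h2 : h b + 1 ≤ t := hbt
      exact absurd (h2.trans h1) (by simp)
    · refine aux_cof_le (fun b : Iio δ => (⟨h b, hh b b.2⟩ : Iio κ)) ?_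
      intro T hT i
      obtain ⟨t, ht, hit⟩ := hT ⟨a i, ha i i.2⟩
      exact ⟨_, ⟨t, ht, rfl⟩, hab i i.2 t hit t.2⟩
  rw [Ordinal.cof_Iio, Ordinal.cof_Iio, ← Ordinal.lift_cof, ← Ordinal.lift_cof] at key
  exact Cardinal.lift_injective key

/-- Closure points of a function form a club. -/
theorem aux_club (c : Cardinal.{0}) (hc : c.IsRegular) (hc' : c ≠ ℵ₀)
    (f : Ordinal.{0} → Ordinal.{0}) (hf : ∀ a < c.ord, f a < c.ord) :
    IsClubIn c.ord {δ | δ < c.ord ∧ ∀ a < δ, f a < δ} := by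
  refine ⟨fun x hx => hx.1, ?_, ?_⟩
  · intro a ha
    let g : Ordinal.{0} → Ordinal.{0} := fun x => sSup ((fun y => f y + 1) '' Iio x)
    have hsm : ∀ x : Ordinal.{0}, BddAbove ((fun y => f y + 1) '' Iio x) := fun x =>
      Ordinal.bddAbove_of_small
    have hg : ∀ i < c.ord, g i < c.ord := by
      intro i hi
      apply Ordinal.sSup_lt_of_lt_cof
      · rw [← Ordinal.lift_cof, hc.cof_ord]
        refine mk_image_le.trans_lt ?_
        rw [Cardinal.mk_Iio_ordinal]
        exact Cardinal.lift_lt.2 (lt_ord.1 hi)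
      · rintro _ ⟨y, hy, rfl⟩
        exact (isSuccLimit_ord hc.aleph0_le).succ_lt (hf y (lt_trans hy hi))
    refine ⟨nfp g a, ⟨nfp_lt_ord_of_isRegular hc hc' hg ha, ?_⟩, le_nfp g a⟩
    intro b hb
    obtain ⟨n, hn⟩ := lt_nfp_iff.1 hb
    apply lt_nfp_iff.2
    refine ⟨n + 1, ?_⟩
    rw [Function.iterate_succ_apply']
    exact lt_of_lt_of_le (by simp) (le_csSup (hsm _) ⟨b, hn, rfl⟩)
  · intro a ha hne hsup
    refine ⟨ha, fun b hb => ?_⟩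
    rw [← hsup] at hb
    obtain ⟨x, hx, hbx⟩ := exists_lt_of_lt_csSup hne hb
    exact (hx.1.2 b hbx).trans hx.2

/-- Enumeration of all bounded pieces of triples of functions. -/
theorem aux_enum (χ : Cardinal.{0}) (hχ : ℵ₀ ≤ χ)
    (h2 : (2 : Cardinal.{0}) ^ χ = Order.succ χ) :
    ∃ (A : Ordinal.{0} → Ordinal.{0})
      (p : Ordinal.{0} → Ordinal.{0} → Ordinal.{0} → Ordinal.{0} → Ordinal.{0}),
      (∀ β i η b, p β i η b < (Order.succ χ).ord) ∧
      ∀ X : Ordinal.{0} → Ordinal.{0} → Ordinal.{0} → Ordinal.{0},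
        (∀ i < χ.ord, ∀ η < χ.ord, ∀ b < (Order.succ χ).ord, X i η b < (Order.succ χ).ord) →
        ∀ α < (Order.succ χ).ord, ∃ β < (Order.succ χ).ord, A β = α ∧
          ∀ i < χ.ord, ∀ η < χ.ord, ∀ b < α, p β i η b = X i η b := by
  set o := (Order.succ χ).ord with ho
  have ho0 : (0 : Ordinal) < o :=
    (isSuccLimit_ord (hχ.trans (Order.le_succ χ))).pos
  let K := Iio χ.ord
  let T := Σ α : Iio o, (K × K × Iio α.1 → Iio o)
  have hpow : (Order.succ χ) ^ χ = Order.succ χ := by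
    rw [← h2, ← Cardinal.power_mul, Cardinal.mul_eq_self hχ]
  have hK : #K = Cardinal.lift.{1} χ := by simp [K, Cardinal.mk_Iio_ordinal]
  have hO : #(Iio o) = Cardinal.lift.{1} (Order.succ χ) := by simp [o, Cardinal.mk_Iio_ordinal]
  have hχ' : ℵ₀ ≤ Cardinal.lift.{1} χ := by simpa using hχ
  have hT : #T ≤ #(Iio o) := by
    have h1 : ∀ α : Iio o, #(K × K × Iio α.1 → Iio o) ≤ #(Iio o) := by
      intro α
      have hα : #(Iio α.1) ≤ Cardinal.lift.{1} χ := by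
        rw [Cardinal.mk_Iio_ordinal, Cardinal.lift_le]
        exact Order.lt_succ_iff.1 (lt_ord.1 α.2)
      have hc : #(K × K × Iio α.1) ≤ Cardinal.lift.{1} χ := by
        simp only [Cardinal.mk_prod, Cardinal.lift_id, hK]
        calc _ ≤ Cardinal.lift.{1} χ * (Cardinal.lift.{1} χ * Cardinal.lift.{1} χ) := by gcongr
          _ = _ := by rw [Cardinal.mul_eq_self hχ', Cardinal.mul_eq_self hχ']
      have : #(K × K × Iio α.1 → Iio o) = #(Iio o) ^ #(K × K × Iio α.1) := by simp
      rw [this, hO]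
      calc _ ≤ Cardinal.lift.{1} (Order.succ χ) ^ Cardinal.lift.{1} χ :=
            Cardinal.power_le_power_left (by simp) hc
        _ = Cardinal.lift.{1} ((Order.succ χ) ^ χ) := by rw [Cardinal.lift_power]
        _ = _ := by rw [hpow]
    calc #T = Cardinal.sum (fun α : Iio o => #(K × K × Iio α.1 → Iio o)) := Cardinal.mk_sigma _
      _ ≤ Cardinal.sum (fun _ : Iio o => #(Iio o)) := Cardinal.sum_le_sum _ _ h1
      _ = #(Iio o) := by
        rw [Cardinal.sum_const, Cardinal.lift_id, Cardinal.mul_eq_self]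
        exact hχ.trans (Order.le_succ χ) |> fun h => by rw [hO]; exact Cardinal.aleph0_le_lift.2 h
  obtain ⟨emb⟩ := hT
  have : Nonempty T := ⟨⟨⟨0, ho0⟩, fun _ => ⟨0, ho0⟩⟩⟩
  let F : Iio o → T := Function.invFun emb
  have hF : ∀ t, F (emb t) = t := Function.leftInverse_invFun emb.injective
  classical
  refine ⟨fun β => if hβ : β < o then (F ⟨β, hβ⟩).1.1 else 0,
    fun β i η b => if h : β < o then
      if h' : i < χ.ord ∧ η < χ.ord ∧ b < (F ⟨β, h⟩).1.1 then
        ((F ⟨β, h⟩).2 (⟨i, h'.1⟩, ⟨η, h'.2.1⟩, ⟨b, h'.2.2⟩)).1 else 0 else 0, ?_, ?_⟩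
  · intro β i η b
    dsimp only
    split_ifs with h h'
    · exact ((F ⟨β, h⟩).2 (⟨i, h'.1⟩, ⟨η, h'.2.1⟩, ⟨b, h'.2.2⟩)).2
    · exact ho0
    · exact ho0
  · intro X hX α hα
    let t : T := ⟨⟨α, hα⟩, fun q => ⟨X q.1 q.2.1 q.2.2,
      hX _ q.1.2 _ q.2.1.2 _ (lt_trans q.2.2.2 hα)⟩⟩
    have key : ∀ s : T, s = t → s.1.1 = α ∧ ∀ i (hi : i < χ.ord) η (hη : η < χ.ord) b,
        b < α → ∀ (hb : b < s.1.1), (s.2 (⟨i, hi⟩, ⟨η, hη⟩, ⟨b, hb⟩)).1 = X i η b := by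
      rintro s rfl
      exact ⟨rfl, fun _ _ _ _ _ _ _ => rfl⟩
    have k := key (F (emb t)) (hF t)
    have hlt : (emb t).1 < o := (emb t).2
    refine ⟨(emb t).1, hlt, ?_, ?_⟩
    · simp only [hlt, dif_pos]
      exact k.1
    · intro i hi η hη b hb
      have hbA : b < (F ⟨(emb t).1, hlt⟩).1.1 := by
        change b < (F (emb t)).1.1
        rw [k.1]; exact hb
      simp only [hlt, dif_pos]
      rw [dif_pos ⟨hi, hη, hbA⟩]
      exact k.2 i hi η hη b hb hbA

/-- Every ordinal below `χ⁺` injects into `χ`. -/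
theorem aux_inj (χ : Cardinal.{0}) (hχ : ℵ₀ ≤ χ) (δ : Ordinal.{0})
    (hδ : δ < (Order.succ χ).ord) :
    ∃ e : Ordinal.{0} → Ordinal.{0}, (∀ a, e a < χ.ord) ∧
      ∀ a < δ, ∀ b < δ, e a = e b → a = b := by
  have h0 : (0 : Ordinal) < χ.ord := (isSuccLimit_ord hχ).pos
  have h : #(Iio δ) ≤ #(Iio χ.ord) := by
    rw [Cardinal.mk_Iio_ordinal, Cardinal.mk_Iio_ordinal, Cardinal.lift_le, card_ord]
    exact Order.lt_succ_iff.1 (lt_ord.1 hδ)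
  obtain ⟨emb⟩ := h
  classical
  refine ⟨fun a => if h : a < δ then (emb ⟨a, h⟩).1 else 0, ?_, ?_⟩
  · intro a
    dsimp only
    split_ifs with h
    · exact (emb ⟨a, h⟩).2
    · exact h0
  · intro a ha b hb hab
    simp only [ha, hb, dif_pos] at hab
    have := emb.injective (Subtype.ext hab)
    exact congrArg Subtype.val this

theorem stmt5 (χ : Cardinal.{0}) (hχ : ℵ₀ ≤ χ) (h2 : (2 : Cardinal.{0}) ^ χ = Order.succ χ)
    (D : Set (Set Ordinal.{0})) (hD : IsFilterOn (Order.succ χ).ord D)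
    (hDclub : ExtendsClubs (Order.succ χ).ord D)
    (hcomp : CompleteFor (Order.succ χ) (Order.succ χ).ord D)
    (S : Set Ordinal) (hS : DPos (Order.succ χ).ord D S)
    (hcf : ∀ δ ∈ S, δ.cof ≠ χ.ord.cof) :
    DiamondFilter (Order.succ χ).ord (DPlus (Order.succ χ).ord D S) := by
  classical
  by_contra hno
  obtain ⟨A, p, hp, hA⟩ := aux_enum χ hχ h2
  have hinj := aux_inj χ hχ
  have hreg := isRegular_succ hχ
  have hne : Order.succ χ ≠ ℵ₀ := (lt_of_le_of_lt hχ (Order.lt_succ χ)).ne'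
  set o := (Order.succ χ).ord with ho
  have holim : Order.IsSuccLimit o := isSuccLimit_ord hreg.aleph0_le
  have hχlim : Order.IsSuccLimit χ.ord := isSuccLimit_ord hχ
  have ho0 : (0 : Ordinal) < o := holim.pos
  choose! e he heinj using hinj
  -- failure of the diamond, for every guessing sequence
  have hfail : ∀ f : Ordinal → Ordinal → Ordinal, (∀ α β, f α β < o) →
      ∃ g : Ordinal → Ordinal, (∀ α < o, g α < o) ∧
        Iio o \ {α | α ∈ S ∧ ∀ β < α, g β = f α β} ∈ D := by
    intro f hf
    by_contra hcon
    push Not at hcon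
    apply hno
    refine ⟨S, ⟨hS.1, ?_⟩, f, fun α _ β _ => hf α β, ?_⟩
    · rintro ⟨-, h⟩
      rw [union_self] at h
      exact hS.2 h
    · intro g hg
      refine ⟨fun x hx => hS.1 hx.1, ?_⟩
      rintro ⟨-, h⟩
      apply hcon g hg
      convert h using 1
      ext x
      simp only [mem_diff, mem_union, mem_setOf_eq]
      tauto
  choose! G hG hGD using hfail
  -- the guess built from the previous counterexamples
  let P : Ordinal → Ordinal → (Ordinal → Ordinal → Ordinal) → Ordinal → Ordinal → Ordinal → Prop :=
    fun i ζ Y δ b β => β < δ ∧ e δ β < i ∧ b < A β ∧ ∀ η < ζ, ∀ c < A β, p β i η c = Y η c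
  let guess : Ordinal → Ordinal → (Ordinal → Ordinal → Ordinal) → Ordinal → Ordinal → Ordinal :=
    fun i ζ Y δ b => if h : ∃ β, P i ζ Y δ b β then p h.choose i ζ b else 0
  have hguess : ∀ i ζ Y δ b, guess i ζ Y δ b < o := by
    intro i ζ Y δ b
    dsimp only [guess]
    split_ifs with h
    · exact hp _ _ _ _
    · exact ho0
  have hrec : ∀ i, ∃ Y : Ordinal → Ordinal → Ordinal, ∀ ζ,
      Y ζ = G (guess i ζ Y) := by
    intro i
    let Y : Ordinal → Ordinal → Ordinal :=
      (wellFounded_lt (α := Ordinal)).fix (C := fun _ => Ordinal → Ordinal)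
        (fun ζ ih => G (guess i ζ (fun η => if h : η < ζ then ih η h else 0)))
    refine ⟨Y, fun ζ => ?_⟩
    have h1 : Y ζ = G (guess i ζ (fun η => if h : η < ζ then Y η else 0)) :=
      WellFounded.fix_eq _ _ _
    rw [h1]
    congr 1
    have h3 : ∀ δ b β, P i ζ (fun η => if h : η < ζ then Y η else 0) δ b β = P i ζ Y δ b β := by
      intro δ b β
      apply propext
      dsimp only [P]
      refine and_congr_right fun _ => and_congr_right fun _ => and_congr_right fun _ => ?_
      refine forall_congr' fun η => forall_congr' fun hη => ?_
      simp [hη]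
    funext δ b
    have h4 : P i ζ (fun η => if h : η < ζ then Y η else 0) δ b = P i ζ Y δ b := funext (h3 δ b)
    dsimp only [guess]
    simp only [h4]
  choose Y hY using hrec
  have hYlt : ∀ i ζ b, b < o → Y i ζ b < o := by
    intro i ζ b hb
    rw [hY i ζ]
    exact hG _ (hguess i ζ (Y i)) b hb
  have hYD : ∀ i ζ, Iio o \ {α | α ∈ S ∧ ∀ β < α, Y i ζ β = guess i ζ (Y i) α β} ∈ D := by
    intro i ζ
    have := hGD _ (hguess i ζ (Y i))
    rw [← hY i ζ] at this
    exact this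
  have hcode : ∀ α, ∃ β, α < o → β < o ∧ A β = α ∧
      ∀ i < χ.ord, ∀ η < χ.ord, ∀ b < α, p β i η b = Y i η b := by
    intro α
    by_cases hα : α < o
    · obtain ⟨β, h⟩ := hA Y (fun i _ η _ b hb => hYlt i η b hb) α hα
      exact ⟨β, fun _ => h⟩
    · exact ⟨0, fun h => absurd h hα⟩
  choose f hf using hcode
  have hclub := hDclub _ (aux_club _ hreg hne (fun a => max (f a) (a + 1))
    (fun a ha => max_lt (hf a ha).1 (holim.succ_lt ha)))
  have hcard : χ.ord.card < Order.succ χ := by simp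
  have hE1 := hcomp χ.ord hcard
    (fun i => Iio o ∩ ⋂ ζ ∈ Iio χ.ord,
      Iio o \ {α | α ∈ S ∧ ∀ β < α, Y i ζ β = guess i ζ (Y i) α β})
    (fun i _ => hcomp χ.ord hcard _ (fun ζ _ => hYD i ζ))
  have hE := hD.2.2.2.2 _ hclub _ hE1
  -- pick a good `δ ∈ S`
  have hex : ∃ δ ∈ S, δ ∈ ({δ | δ < o ∧ ∀ a < δ, max (f a) (a + 1) < δ} ∩
      (Iio o ∩ ⋂ i ∈ Iio χ.ord, (Iio o ∩ ⋂ ζ ∈ Iio χ.ord,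
      Iio o \ {α | α ∈ S ∧ ∀ β < α, Y i ζ β = guess i ζ (Y i) α β}))) := by
    by_contra hcon
    push Not at hcon
    apply hS.2
    refine hD.2.2.2.1 _ hE _ diff_subset ?_
    intro x hx
    exact ⟨hx.1.1, fun hxS => hcon x hxS hx⟩
  obtain ⟨δ, hδS, ⟨hδo, hδcl⟩, -, hδE⟩ := hex
  have hδfail : ∀ i < χ.ord, ∀ ζ < χ.ord, ∃ b < δ, Y i ζ b ≠ guess i ζ (Y i) δ b := by
    intro i hi ζ hζ
    have h1 := mem_iInter₂.1 hδE i hi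
    have h2 := mem_iInter₂.1 h1.2 ζ hζ
    by_contra hcon
    push Not at hcon
    exact h2.2 ⟨hδS, hcon⟩
  obtain ⟨i, hi, hunb⟩ := aux_unbounded δ χ.ord (fun a ha => hχlim.succ_lt ha) (hcf δ hδS)
    (fun a => e δ (f a)) (fun a _ => he δ hδo _)
  have hbad : ∀ ζ, ∃ β, ζ < χ.ord → β < δ ∧ e δ β < i ∧
      (∀ η < ζ, ∀ c < A β, p β i η c = Y i η c) ∧ ¬ ∀ c < A β, p β i ζ c = Y i ζ c := by
    intro ζ
    by_cases hζ : ζ < χ.ord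
    swap
    · exact ⟨0, fun h => absurd h hζ⟩
    obtain ⟨b, hbδ, hb⟩ := hδfail i hi ζ hζ
    obtain ⟨α, hbα, hαδ, hα⟩ := hunb (b + 1) ((le_max_right _ _).trans_lt (hδcl b hbδ))
    have hαo := hαδ.trans hδo
    obtain ⟨-, hAf, hpf⟩ := hf α hαo
    have hbα' : b < α := lt_of_lt_of_le (by simp) hbα
    have hPex : ∃ β, P i ζ (Y i) δ b β := by
      refine ⟨f α, (le_max_left _ _).trans_lt (hδcl α hαδ), hα, ?_, ?_⟩
      · rw [hAf]; exact hbα'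
      · intro η hη c hc
        rw [hAf] at hc
        exact hpf i hi η (hη.trans hζ) c hc
    have hval : guess i ζ (Y i) δ b = p hPex.choose i ζ b := dif_pos hPex
    obtain ⟨q1, q2, q3, q4⟩ := hPex.choose_spec
    refine ⟨hPex.choose, fun _ => ⟨q1, q2, q4, fun hall => hb ?_⟩⟩
    rw [hval, hall b q3]
  choose B hB using hbad
  have hinjB : ∀ ζ < χ.ord, ∀ ζ' < χ.ord, ζ < ζ' → e δ (B ζ) ≠ e δ (B ζ') := by
    intro ζ hζ ζ' hζ' hlt heq
    have h1 := hB ζ hζ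
    have h2 := hB ζ' hζ'
    have h3 := heinj δ hδo _ h1.1 _ h2.1 heq
    apply h1.2.2.2
    rw [h3]
    exact h2.2.2.1 ζ hlt
  have hle : #(Iio χ.ord) ≤ #(Iio i) := by
    refine Cardinal.mk_le_of_injective
      (f := fun ζ : Iio χ.ord => (⟨e δ (B ζ), (hB ζ ζ.2).2.1⟩ : Iio i)) ?_
    intro ζ ζ' h
    have h' : e δ (B ζ) = e δ (B ζ') := congrArg Subtype.val h
    apply Subtype.ext
    rcases lt_trichotomy ζ.1 ζ'.1 with hlt | heq | hlt
    · exact absurd h' (hinjB _ ζ.2 _ ζ'.2 hlt)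
    · exact heq
    · exact absurd h'.symm (hinjB _ ζ'.2 _ ζ.2 hlt)
  rw [Cardinal.mk_Iio_ordinal, Cardinal.mk_Iio_ordinal, Cardinal.lift_le, card_ord] at hle
  exact absurd (lt_ord.1 hi) hle.not_gt
end

section
/- Assume λ = χ⁺ = 2^χ with ℵ₀ < κ = cf(χ) < χ. If ◊_S fails for some stationary S ⊆ S^λ_κ, then λ has strong non-reflection for S in κ, i.e. there are h : λ → κ and a club E of λ such that for every δ ∈ S ∩ E, h is strictly increasing on some club of δ. -/
open Ordinal Set Cardinal

lemma bnd {ι : Type} (f : ι → Ordinal.{0}) (o : Ordinal.{0}) (h : #ι < o.cof)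
    (hf : ∀ i, f i < o) : ∃ b < o, ∀ i, f i < b :=
  ⟨⨆ i, (f i + 1), Ordinal.iSup_add_one_lt_of_lt_cof h hf, fun i =>
    lt_of_lt_of_le (lt_add_one (f i)) (le_ciSup (f := fun i => f i + 1) Ordinal.bddAbove_of_small i)⟩

lemma bnd' (a : Ordinal.{0}) (f : Ordinal.{0} → Ordinal.{0}) (o : Ordinal.{0}) (h : a.card < o.cof)
    (hf : ∀ x < a, f x < o) : ∃ b < o, ∀ x < a, f x < b := by
  obtain ⟨b, hb, h'⟩ := bnd (fun i : a.ToType => f (Ordinal.ToType.toOrd i).1) o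
    (by rwa [Cardinal.mk_toType]) (fun i => hf _ (Ordinal.ToType.toOrd i).2)
  refine ⟨b, hb, fun x hx => ?_⟩
  have := h' (Ordinal.ToType.mk ⟨x, hx⟩)
  simpa using this

lemma cofin (o : Ordinal.{0}) : ∃ c : Ordinal.{0} → Ordinal.{0},
    (∀ i < o.cof.ord, c i < o) ∧ ∀ x < o, ∃ i < o.cof.ord, x ≤ c i := by
  obtain ⟨s, hs, hc⟩ := Order.exists_cof_eq o.ToType
  rw [Ordinal.cof_toType] at hc
  have : #s = #(o.cof.ord.ToType) := by rw [hc]; simp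
  obtain ⟨e⟩ := Cardinal.eq.1 this
  classical
  refine ⟨fun i => if h : i < o.cof.ord then
    (Ordinal.ToType.toOrd (e.symm (Ordinal.ToType.mk ⟨i, h⟩)).1).1 else 0, ?_, ?_⟩
  · intro i hi
    simp only [hi, dif_pos]
    exact (Ordinal.ToType.toOrd _).2
  · intro x hx
    obtain ⟨y, hy, hxy⟩ := hs (Ordinal.ToType.mk ⟨x, hx⟩)
    refine ⟨(Ordinal.ToType.toOrd (e ⟨y, hy⟩)).1, (Ordinal.ToType.toOrd (e ⟨y, hy⟩)).2, ?_⟩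
    have h1 : (Ordinal.ToType.toOrd (e ⟨y, hy⟩)).1 < o.cof.ord := (Ordinal.ToType.toOrd (e ⟨y, hy⟩)).2
    simp only [h1, dif_pos]
    have h2 := (Ordinal.ToType.mk.symm.monotone hxy)
    have h3 : Ordinal.ToType.mk ⟨(Ordinal.ToType.toOrd (e ⟨y, hy⟩)).1, h1⟩ = e ⟨y, hy⟩ :=
      Ordinal.ToType.mk.apply_symm_apply _
    rw [h3, Equiv.symm_apply_apply]
    rw [OrderIso.symm_apply_apply] at h2
    exact h2

def ClP (o : Ordinal.{0}) (m : Ordinal.{0} → Ordinal.{0}) : Set Ordinal.{0} :=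
  {ε | ε < o ∧ 0 < ε ∧ ∀ η < ε, m η < ε}

lemma ClP_unb (o : Ordinal.{0}) (ho : ℵ₀ < o.cof) (hr : ∀ a < o, a.card < o.cof)
    (m : Ordinal.{0} → Ordinal.{0}) (hm : ∀ a < o, m a < o) (a : Ordinal.{0}) (ha : a < o) :
    ∃ b ∈ ClP o m, a < b := by
  have hlim : Order.IsSuccLimit o := Ordinal.one_lt_cof_iff.1 (Cardinal.one_lt_aleph0.trans ho)
  have step : ∀ x : Ordinal.{0}, ∃ y : Ordinal.{0}, x < o → y < o ∧ x < y ∧ ∀ η < x, m η < y := by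
    intro x
    by_cases hx : x < o
    · obtain ⟨b, hb, h'⟩ := bnd' x m o (hr x hx) (fun z hz => hm z (hz.trans hx))
      refine ⟨max b (Order.succ x), fun _ => ⟨max_lt hb (hlim.succ_lt hx), ?_, ?_⟩⟩
      · exact lt_of_lt_of_le (Order.lt_succ x) (le_max_right _ _)
      · exact fun η hη => (h' η hη).trans_le (le_max_left _ _)
    · exact ⟨0, fun h => (hx h).elim⟩
  choose g hg using step
  let s : ℕ → Ordinal.{0} := fun n => g^[n] a
  have hs1 : ∀ n, s (n+1) = g (s n) := fun n => Function.iterate_succ_apply' g n a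
  have hso : ∀ n, s n < o := by
    intro n
    induction n with
    | zero => exact ha
    | succ n ih => rw [hs1]; exact (hg _ ih).1
  have hlt : ∀ n, s n < ⨆ n, s n := fun n =>
    lt_of_lt_of_le (by rw [hs1]; exact (hg _ (hso n)).2.1 : s n < s (n+1))
      (le_ciSup (f := s) Ordinal.bddAbove_of_small (n+1))
  refine ⟨⨆ n, s n, ⟨?_, ?_, ?_⟩, hlt 0⟩
  · exact Ordinal.iSup_lt_of_lt_cof (by simpa using ho) hso
  · exact lt_of_le_of_lt bot_le (hlt 0)
  · intro η hη
    obtain ⟨n, hn⟩ := Ordinal.lt_iSup_iff.1 hη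
    have := (hg _ (hso n)).2.2 η hn
    rw [← hs1] at this
    exact this.trans (hlt _)

lemma ClP_club (o : Ordinal.{0}) (ho : ℵ₀ < o.cof) (hr : ∀ a < o, a.card < o.cof)
    (m : Ordinal.{0} → Ordinal.{0}) (hm : ∀ a < o, m a < o) : IsClubIn o (ClP o m) := by
  refine ⟨fun x hx => hx.1, fun a ha => ?_, fun a ha hne hsup => ⟨ha, ?_, ?_⟩⟩
  · obtain ⟨b, hb, h⟩ := ClP_unb o ho hr m hm a ha
    exact ⟨b, hb, h.le⟩
  · obtain ⟨x, hx, hxa⟩ := hne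
    exact lt_of_le_of_lt bot_le hxa
  · intro η hη
    rw [← hsup] at hη
    obtain ⟨y, hy, hηy⟩ := exists_lt_of_lt_csSup hne hη
    exact (hy.1.2.2 η hηy).trans hy.2

lemma club_next (o : Ordinal.{0}) (hlim : Order.IsSuccLimit o) (D : Set Ordinal.{0})
    (hD : IsClubIn o D) : ∃ m : Ordinal.{0} → Ordinal.{0}, (∀ a < o, m a < o) ∧
      ∀ δ < o, 0 < δ → (∀ η < δ, m η < δ) → δ ∈ D := by
  have : ∀ a : Ordinal.{0}, ∃ b : Ordinal.{0}, a < o → b ∈ D ∧ a < b := by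
    intro a
    by_cases ha : a < o
    · obtain ⟨b, hb, h⟩ := hD.2.1 (Order.succ a) (hlim.succ_lt ha)
      exact ⟨b, fun _ => ⟨hb, (Order.lt_succ a).trans_le h⟩⟩
    · exact ⟨0, fun h => (ha h).elim⟩
  choose m hm using this
  refine ⟨m, fun a ha => hD.1 (hm a ha).1, fun δ hδ h0 hcl => hD.2.2 δ hδ ?_ ?_⟩
  · exact ⟨m 0, (hm 0 (h0.trans hδ)).1, hcl 0 h0⟩
  · apply le_antisymm
    · exact csSup_le ⟨m 0, (hm 0 (h0.trans hδ)).1, hcl 0 h0⟩ (fun x hx => hx.2.le)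
    · by_contra hlt
      push Not at hlt
      have h1 := hm _ (hlt.trans hδ)
      have h2 : m (sSup (D ∩ Iio δ)) ≤ sSup (D ∩ Iio δ) :=
        le_csSup ⟨δ, fun x hx => hx.2.le⟩ ⟨h1.1, hcl _ hlt⟩
      exact absurd h1.2 (not_lt.2 h2)

lemma inj_ex (χ : Cardinal.{0}) (hχ : ℵ₀ ≤ χ) : ∃ e : Ordinal.{0} → Ordinal.{0} → χ.ord.ToType,
    ∀ β < (Order.succ χ).ord, Set.InjOn (e β) (Set.Iio β) := by
  classical
  have hne : Nonempty χ.ord.ToType := by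
    rw [← Cardinal.mk_ne_zero_iff, Cardinal.mk_ord_toType]
    exact (Cardinal.aleph0_pos.trans_le hχ).ne'
  have : ∀ β : Ordinal.{0}, ∃ e : Ordinal.{0} → χ.ord.ToType,
      β < (Order.succ χ).ord → Set.InjOn e (Set.Iio β) := by
    intro β
    by_cases hβ : β < (Order.succ χ).ord
    · have h1 : #β.ToType ≤ #χ.ord.ToType := by
        rw [Cardinal.mk_toType, Cardinal.mk_ord_toType]
        exact Order.lt_succ_iff.1 (Cardinal.lt_ord.1 hβ)
      obtain ⟨g⟩ := h1
      refine ⟨fun x => if h : x < β then g (Ordinal.ToType.mk ⟨x, h⟩) else Classical.arbitrary _,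
        fun _ x hx y hy hxy => ?_⟩
      have hx' : x < β := hx
      have hy' : y < β := hy
      simp only [hx', hy', dif_pos] at hxy
      have := Ordinal.ToType.mk.injective (g.injective hxy)
      exact congrArg Subtype.val this
    · exact ⟨fun _ => Classical.arbitrary _, fun h => (hβ h).elim⟩
  choose e he using this
  exact ⟨e, he⟩

lemma coding (χ : Cardinal.{0}) (hχ : ℵ₀ ≤ χ) (h2 : (2 : Cardinal.{0}) ^ χ = Order.succ χ)
    (N : Type) (hN : #N ≤ χ) :
    ∃ (al : Ordinal.{0} → Ordinal.{0}) (val : Ordinal.{0} → N → Ordinal.{0} → Ordinal.{0}),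
      ∀ α < (Order.succ χ).ord, ∀ X : N → Ordinal.{0} → Ordinal.{0},
        (∀ n, ∀ x < (Order.succ χ).ord, X n x < (Order.succ χ).ord) →
        ∃ γ < (Order.succ χ).ord, al γ = α ∧ ∀ n, ∀ x < α, val γ n x = X n x := by
  classical
  obtain ⟨e, he⟩ := inj_ex χ hχ
  set L := (Order.succ χ).ord with hL
  have hLne : Nonempty L.ToType := by
    rw [← Cardinal.mk_ne_zero_iff, hL, Cardinal.mk_ord_toType]
    exact (Cardinal.aleph0_pos.trans_le (hχ.trans (Order.le_succ χ))).ne'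
  have hL0 : 0 < L := by
    rw [hL, Cardinal.lt_ord]
    simp
  let Q := L.ToType × (N → χ.ord.ToType → L.ToType)
  have hQ : #Q ≤ #L.ToType := by
    have e1 : #Q = Order.succ χ * ((Order.succ χ) ^ χ) ^ (#N) := by
      simp only [Q, Cardinal.mk_prod, Cardinal.lift_id, hL, Cardinal.mk_ord_toType,
        ← Cardinal.power_def]
    have hs : ℵ₀ ≤ Order.succ χ := hχ.trans (Order.le_succ χ)
    have e2 : (Order.succ χ) ^ χ = Order.succ χ := by
      rw [← h2, ← Cardinal.power_mul, Cardinal.mul_eq_self hχ]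
    rw [e1, e2, hL, Cardinal.mk_ord_toType]
    calc Order.succ χ * Order.succ χ ^ (#N) ≤ Order.succ χ * Order.succ χ ^ χ := by
          gcongr
          exact Cardinal.power_le_power_left (Cardinal.aleph0_pos.trans_le hs).ne' hN
      _ = Order.succ χ := by rw [e2, Cardinal.mul_eq_self hs]
  obtain ⟨g⟩ := hQ
  have hqs : Function.Surjective (Function.invFun g) := Function.invFun_surjective g.injective
  set q : L.ToType → Q := Function.invFun g with hq
  let q' : Ordinal.{0} → Q := fun γ => if h : γ < L then q (Ordinal.ToType.mk ⟨γ, h⟩)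
    else Classical.arbitrary _
  refine ⟨fun γ => (Ordinal.ToType.toOrd (q' γ).1).1,
    fun γ n x => (Ordinal.ToType.toOrd ((q' γ).2 n (e (Ordinal.ToType.toOrd (q' γ).1).1 x))).1, ?_⟩
  intro α hα X hX
  let F : N → χ.ord.ToType → L.ToType := fun n z =>
    if h : ∃ x, x < α ∧ e α x = z then
      Ordinal.ToType.mk ⟨X n h.choose, hX n _ (h.choose_spec.1.trans hα)⟩
    else Classical.arbitrary _
  obtain ⟨t, ht⟩ := hqs (Ordinal.ToType.mk ⟨α, hα⟩, F)
  have h1 : (Ordinal.ToType.toOrd t).1 < L := (Ordinal.ToType.toOrd t).2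
  have h3 : Ordinal.ToType.mk ⟨(Ordinal.ToType.toOrd t).1, h1⟩ = t :=
    Ordinal.ToType.mk.apply_symm_apply _
  have h4 : q' (Ordinal.ToType.toOrd t).1 = (Ordinal.ToType.mk ⟨α, hα⟩, F) := by
    simp only [q', h1, dif_pos, h3, ht]
  have h5 : (Ordinal.ToType.toOrd (Ordinal.ToType.mk (⟨α, hα⟩ : Set.Iio L))).1 = α := by
    simp
  refine ⟨(Ordinal.ToType.toOrd t).1, h1, ?_, ?_⟩
  · simp only [h4, h5]
  · intro n x hx
    simp only [h4, h5]
    have hex : ∃ y, y < α ∧ e α y = e α x := ⟨x, hx, rfl⟩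
    have hch : hex.choose = x := he α hα hex.choose_spec.1 hx hex.choose_spec.2
    simp only [F, hex, dif_pos]
    simp [hch]

lemma diag_step (o : Ordinal.{0}) (hlim : Order.IsSuccLimit o) (S : Set Ordinal.{0})
    (hS : S ⊆ Set.Iio o) (hfail : ¬ DiamondFun o S)
    (g : Ordinal.{0} → Ordinal.{0} → Ordinal.{0}) (hg : ∀ δ ∈ S, ∀ α < δ, g δ α < δ) :
    ∃ X m : Ordinal.{0} → Ordinal.{0}, (∀ α < o, X α < o) ∧ (∀ α < o, m α < o) ∧
      ∀ δ ∈ S, 0 < δ → (∀ η < δ, m η < δ) → ∃ x < δ, X x ≠ g δ x := by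
  by_contra hcon
  apply hfail
  refine ⟨g, hg, fun f hf => ⟨fun x hx => hS hx.1, fun C hC => ?_⟩⟩
  by_contra hemp
  apply hcon
  obtain ⟨m, hm, hm'⟩ := club_next o hlim C hC
  refine ⟨f, m, hf, hm, fun δ hδ h0 hcl => ?_⟩
  have := hm' δ (hS hδ) h0 hcl
  by_contra hno
  push Not at hno
  exact hemp ⟨δ, ⟨hδ, hno⟩, this⟩

lemma lemmaA (χ : Cardinal.{0}) (hχ : ℵ₀ ≤ χ) (h2 : (2 : Cardinal.{0}) ^ χ = Order.succ χ)
    (S : Set Ordinal.{0}) (hS : S ⊆ Set.Iio (Order.succ χ).ord)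
    (hfail : ¬ DiamondFun (Order.succ χ).ord S)
    (I : Type) (hI : #I ≤ χ) (K : I → Type) (hK : ∀ i, #(K i) < χ)
    (w : Ordinal.{0} → (i : I) → K i → Ordinal.{0}) :
    ∃ f M : Ordinal.{0} → Ordinal.{0}, (∀ α < (Order.succ χ).ord, f α < (Order.succ χ).ord) ∧
      (∀ α < (Order.succ χ).ord, M α < (Order.succ χ).ord) ∧
      (∀ α < (Order.succ χ).ord, f α < M α) ∧
      ∀ δ ∈ S, δ ∈ ClP (Order.succ χ).ord M → ∀ i, ∃ s < δ, ∀ α < δ,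
        f α ∈ Set.range (w δ i) → α ≤ s := by
  classical
  set L := (Order.succ χ).ord with hL
  have hreg : L.cof = Order.succ χ := (Cardinal.isRegular_succ hχ).cof_ord
  have hlim : Order.IsSuccLimit L := Cardinal.isSuccLimit_ord (hχ.trans (Order.le_succ χ))
  let J := χ.ord.ToType
  have hJ : #J = χ := Cardinal.mk_ord_toType χ
  have hN : #(I × J) ≤ χ := by
    rw [Cardinal.mk_prod, Cardinal.lift_id, Cardinal.lift_id, hJ]
    calc #I * χ ≤ χ * χ := by gcongr
      _ = χ := Cardinal.mul_eq_self hχ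
  obtain ⟨al, val, hcode⟩ := coding χ hχ h2 (I × J) hN
  rw [← hL] at hcode
  -- the set of codes still alive
  let V : I → J → (J → Ordinal.{0} → Ordinal.{0}) → Ordinal.{0} → Set Ordinal.{0} :=
    fun i j P δ => {γ | γ ∈ Set.range (w δ i) ∧ ∀ j' < j, ∀ y < al γ, val γ (i, j') y = P j' y}
  let g : I → J → (J → Ordinal.{0} → Ordinal.{0}) → Ordinal.{0} → Ordinal.{0} → Ordinal.{0} :=
    fun i j P δ x => if h : ∃ γ, γ ∈ V i j P δ ∧ x < al γ ∧ val γ (i, j) x < δ then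
      val h.choose (i, j) x else 0
  have hg : ∀ i j P, ∀ δ ∈ S, ∀ α < δ, g i j P δ α < δ := by
    intro i j P δ _ α hα
    simp only [g]
    split_ifs with h
    · exact h.choose_spec.2.2
    · exact lt_of_le_of_lt bot_le hα
  have hstep := fun i j P => diag_step L hlim S hS hfail (g i j P) (hg i j P)
  choose X0 m0 hX0 hm0 hXm using hstep
  let X : I → J → Ordinal.{0} → Ordinal.{0} := fun i =>
    (wellFounded_lt (α := J)).fix (fun j (prev : ∀ j', j' < j → Ordinal.{0} → Ordinal.{0}) =>
      X0 i j (fun j' => if h : j' < j then prev j' h else fun _ => 0))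
  let P : I → J → J → Ordinal.{0} → Ordinal.{0} := fun i j j' => if j' < j then X i j' else fun _ => 0
  have hXeq : ∀ i j, X i j = X0 i j (P i j) := by
    intro i j
    simp only [X]
    rw [WellFounded.fix_eq]
    simp only [P, X, dite_eq_ite]
  have hXL : ∀ i j, ∀ x < L, X i j x < L := by
    intro i j x hx
    rw [hXeq]
    exact hX0 i j _ x hx
  have hf : ∀ α : Ordinal.{0}, ∃ γ : Ordinal.{0}, α < L → γ < L ∧ al γ = α ∧
      ∀ i j, ∀ x < α, val γ (i, j) x = X i j x := by
    intro α
    by_cases hα : α < L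
    · obtain ⟨γ, h1, h3, h4⟩ := hcode α hα (fun n => X n.1 n.2) (fun n x hx => hXL _ _ x hx)
      exact ⟨γ, fun _ => ⟨h1, h3, fun i j x hx => h4 (i, j) x hx⟩⟩
    · exact ⟨0, fun h => (hα h).elim⟩
  choose f hf using hf
  have hM : ∀ α : Ordinal.{0}, ∃ b : Ordinal.{0}, α < L → b < L ∧ f α < b ∧
      ∀ i j, X i j α < b ∧ m0 i j (P i j) α < b := by
    intro α
    by_cases hα : α < L
    · obtain ⟨b, hb, hb'⟩ := bnd (fun n : I × J => max (X n.1 n.2 α) (m0 n.1 n.2 (P n.1 n.2) α)) L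
        (by rw [hreg]; exact Order.lt_succ_of_le hN)
        (fun n => max_lt (hXL _ _ α hα) (hm0 _ _ _ α hα))
      refine ⟨max b (Order.succ (f α)), fun _ => ⟨max_lt hb (hlim.succ_lt (hf α hα).1), ?_, ?_⟩⟩
      · exact (Order.lt_succ _).trans_le (le_max_right _ _)
      · intro i j
        have := max_lt_iff.1 (hb' (i, j))
        exact ⟨this.1.trans_le (le_max_left _ _), this.2.trans_le (le_max_left _ _)⟩
    · exact ⟨0, fun h => (hα h).elim⟩
  choose M hM using hM
  refine ⟨f, M, fun α hα => (hf α hα).1, fun α hα => (hM α hα).1, fun α hα => (hM α hα).2.1, ?_⟩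
  intro δ hδS hδ i
  by_contra hcon
  push Not at hcon
  have hδL : δ < L := hδ.1
  have key : ∀ j : J, ∃ k : K i, w δ i k ∈ V i j (X i) δ ∧
      ∃ y < al (w δ i k), val (w δ i k) (i, j) y ≠ X i j y := by
    intro j
    obtain ⟨x, hx, hne⟩ := hXm i j (P i j) δ hδS hδ.2.1 (fun η hη =>
      ((hM η (hη.trans hδL)).2.2 i j).2.trans (hδ.2.2 η hη))
    rw [← hXeq] at hne
    have hVP : V i j (P i j) δ = V i j (X i) δ := by
      ext γ
      simp only [V, Set.mem_ofPred_eq, P]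
      refine and_congr_right fun _ => forall_congr' fun j' => forall_congr' fun hj' => ?_
      simp only [hj', if_true]
    have hex : ∃ γ, γ ∈ V i j (P i j) δ ∧ x < al γ ∧ val γ (i, j) x < δ := by
      obtain ⟨α, hα, hαr, hxα⟩ := hcon x hx
      obtain ⟨hfL, hal, hval⟩ := hf α (hα.trans hδL)
      refine ⟨f α, ?_, ?_, ?_⟩
      · rw [hVP]
        refine ⟨hαr, fun j' _ y hy => hval i j' y ?_⟩
        rwa [hal] at hy
      · rwa [hal]
      · rw [hval i j x hxα]
        exact ((hM x (hx.trans hδL)).2.2 i j).1.trans (hδ.2.2 x hx)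
    have hgx : g i j (P i j) δ x = val hex.choose (i, j) x := by
      simp only [g, hex, dif_pos]
    obtain ⟨hv, hxa, _⟩ := hex.choose_spec
    rw [hgx] at hne
    have hv' := hVP.subset hv
    obtain ⟨k, hk⟩ := hv'.1
    rw [← hk] at hne hv' hxa
    exact ⟨k, hv', x, hxa, fun h => hne h.symm⟩
  choose k hk1 hk2 using key
  have hinj : Function.Injective k := by
    intro j1 j2 h12
    by_contra hne
    rcases lt_or_gt_of_ne hne with h | h
    · obtain ⟨y, hy, hy'⟩ := hk2 j1
      rw [h12] at hy hy'
      exact hy' ((hk1 j2).2 j1 h y hy)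
    · obtain ⟨y, hy, hy'⟩ := hk2 j2
      rw [← h12] at hy hy'
      exact hy' ((hk1 j1).2 j2 h y hy)
  have := Cardinal.mk_le_of_injective hinj
  rw [hJ] at this
  exact absurd (hK i) (not_lt.2 this)

lemma seq_ex (κ : Cardinal.{0}) (hκ : ℵ₀ < κ) (δ : Ordinal.{0}) (hδ : δ.cof = κ) :
    ∃ B : Ordinal.{0} → Ordinal.{0}, Monotone B ∧ (∀ ε < κ.ord, B ε < δ) ∧
      (∀ x < δ, ∃ ε < κ.ord, x < B ε) ∧ ∀ ε x, x < B ε → ∃ η < ε, x < B (Order.succ η) := by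
  obtain ⟨b, hb1, hb2⟩ := cofin δ
  rw [hδ] at hb1 hb2
  have hlim : Order.IsSuccLimit κ.ord := Cardinal.isSuccLimit_ord hκ.le
  let B : Ordinal.{0} → Ordinal.{0} := fun ε => ⨆ η : Set.Iio ε, (b η.1 + 1)
  have hlt : ∀ ε, ∀ η < ε, b η < B ε := fun ε η hη =>
    (lt_add_one (b η)).trans_le
      (le_ciSup (f := fun η : Set.Iio ε => b η.1 + 1) Ordinal.bddAbove_of_small ⟨η, hη⟩)
  have hle : ∀ ε z, (∀ η < ε, b η < z) → B ε ≤ z := by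
    intro ε z h
    refine ciSup_le' fun η => ?_
    exact Order.add_one_le_of_lt (h η.1 η.2)
  have hex : ∀ ε x, x < B ε → ∃ η < ε, x < B (Order.succ η) := by
    intro ε x hx
    by_contra hcon
    push Not at hcon
    have : B ε ≤ x := hle ε x fun η hη =>
      (hlt (Order.succ η) η (Order.lt_succ η)).trans_le (hcon η hη)
    exact absurd hx (not_lt.2 this)
  refine ⟨B, ?_, ?_, ?_, hex⟩
  · intro ε ε' h
    exact hle ε _ fun η hη => hlt ε' η (hη.trans_le h)
  · intro ε hε
    obtain ⟨z, hz, hz'⟩ := bnd' ε b δ (by rw [hδ]; exact Cardinal.lt_ord.1 hε)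
      (fun x hx => hb1 x (hx.trans hε))
    exact (hle ε z hz').trans_lt hz
  · intro x hx
    obtain ⟨i, hi, hxi⟩ := hb2 x hx
    exact ⟨Order.succ i, hlim.succ_lt hi, hxi.trans_lt (hlt _ i (Order.lt_succ i))⟩

theorem stmt8 (χ κ : Cardinal.{0}) (hκ : ℵ₀ < κ) (hcofχ : χ.ord.cof = κ) (hκχ : κ < χ)
    (h2 : (2 : Cardinal.{0}) ^ χ = Order.succ χ)
    (S : Set Ordinal) (hSsub : S ⊆ {δ | δ < (Order.succ χ).ord ∧ δ.cof = κ})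
    (hS : IsStatIn (Order.succ χ).ord S)
    (hfail : ¬ DiamondFun (Order.succ χ).ord S) :
    SNR (Order.succ χ).ord S κ := by
  classical
  have hχ : ℵ₀ ≤ χ := (hκ.trans hκχ).le
  have hκcof : κ.ord.cof = κ := by
    have := Ordinal.cof_ord_cof χ.ord
    rwa [hcofχ] at this
  have hκlim : Order.IsSuccLimit κ.ord := Cardinal.isSuccLimit_ord hκ.le
  have hκ0 : 0 < κ.ord := by
    rw [Cardinal.lt_ord]; simpa using Cardinal.aleph0_pos.trans hκ
  obtain ⟨c, hc1, hc2⟩ := cofin χ.ord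
  rw [hcofχ] at hc1 hc2
  obtain ⟨e, he⟩ := inj_ex χ hχ
  set L := (Order.succ χ).ord with hL
  have hLcof : L.cof = Order.succ χ := (Cardinal.isRegular_succ hχ).cof_ord
  have hLlim : Order.IsSuccLimit L := Cardinal.isSuccLimit_ord (hχ.trans (Order.le_succ χ))
  have hLr : ∀ a < L, a.card < L.cof := fun a ha => by
    rw [hLcof]; exact Cardinal.lt_ord.1 ha
  have hLa : ℵ₀ < L.cof := by rw [hLcof]; exact Order.lt_succ_of_le hχ
  let R : Ordinal.{0} → Ordinal.{0} → Ordinal.{0} := fun β γ => (Ordinal.ToType.toOrd (e β γ)).1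
  have hR : ∀ β γ, R β γ < χ.ord := fun β γ => (Ordinal.ToType.toOrd (e β γ)).2
  have hRinj : ∀ β < L, ∀ x < β, ∀ y < β, R β x = R β y → x = y := by
    intro β hβ x hx y hy hxy
    apply he β hβ hx hy
    exact Ordinal.ToType.mk.symm.injective (Subtype.ext hxy)
  have hB : ∀ δ : Ordinal.{0}, ∃ B : Ordinal.{0} → Ordinal.{0}, δ ∈ S →
      Monotone B ∧ (∀ ε < κ.ord, B ε < δ) ∧
      (∀ x < δ, ∃ ε < κ.ord, x < B ε) ∧ ∀ ε x, x < B ε → ∃ η < ε, x < B (Order.succ η) := by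
    intro δ
    by_cases hδ : δ ∈ S
    · obtain ⟨B, h⟩ := seq_ex κ hκ δ (hSsub hδ).2
      exact ⟨B, fun _ => h⟩
    · exact ⟨fun _ => 0, fun h => (hδ h).elim⟩
  choose B hB using hB
  let I := κ.ord.ToType
  let K : I → Type := fun i => κ.ord.ToType × (c (Ordinal.ToType.toOrd i).1).ToType
  have hK : ∀ i, #(K i) < χ := by
    intro i
    simp only [K, Cardinal.mk_prod, Cardinal.lift_id, Cardinal.mk_toType, Cardinal.card_ord]
    exact Cardinal.mul_lt_of_lt hχ hκχ (Cardinal.lt_ord.1 (hc1 _ (Ordinal.ToType.toOrd i).2))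
  let w : Ordinal.{0} → (i : I) → K i → Ordinal.{0} := fun δ i p =>
    if h : ∃ γ, γ < B δ (Ordinal.ToType.toOrd p.1).1 ∧
      R (B δ (Ordinal.ToType.toOrd p.1).1) γ = (Ordinal.ToType.toOrd p.2).1 then h.choose else 0
  have hw : ∀ δ ∈ S, ∀ (i : Ordinal.{0}) (hi : i < κ.ord), ∀ ε < κ.ord, ∀ γ < B δ ε,
      R (B δ ε) γ < c i → γ ∈ Set.range (w δ (Ordinal.ToType.mk ⟨i, hi⟩)) := by
    intro δ hδ i hi ε hε γ hγ hlt
    have hi' : (Ordinal.ToType.toOrd (Ordinal.ToType.mk (⟨i, hi⟩ : Set.Iio κ.ord))).1 = i := by simp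
    have hlt' : R (B δ ε) γ <
        c (Ordinal.ToType.toOrd (Ordinal.ToType.mk (⟨i, hi⟩ : Set.Iio κ.ord))).1 := by rwa [hi']
    refine ⟨(Ordinal.ToType.mk ⟨ε, hε⟩, Ordinal.ToType.mk ⟨R (B δ ε) γ, hlt'⟩), ?_⟩
    have hex : ∃ γ', γ' < B δ ε ∧ R (B δ ε) γ' = R (B δ ε) γ := ⟨γ, hγ, rfl⟩
    have hBL : B δ ε < L := ((hB δ hδ).2.1 ε hε).trans (hSsub hδ).1
    have hch : hex.choose = γ :=
      hRinj _ hBL _ hex.choose_spec.1 _ hγ hex.choose_spec.2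
    simp only [w, OrderIso.symm_apply_apply]
    rw [dif_pos hex]
    exact hch
  obtain ⟨f, M, hfL, hML, hfM, hmain⟩ := lemmaA χ hχ h2 S (fun x hx => (hSsub hx).1) hfail I
    (by simp only [I, Cardinal.mk_ord_toType]; exact hκχ.le) K hK w
  rw [← hL] at hfL hML hfM hmain
  -- a version of `M` bounding the values at all smaller points
  have hM' : ∀ η : Ordinal.{0}, ∃ b : Ordinal.{0}, η < L → b < L ∧ ∀ x < Order.succ η, M x < b := by
    intro η
    by_cases hη : η < L
    · obtain ⟨b, hb, h⟩ := bnd' (Order.succ η) M L (hLr _ (hLlim.succ_lt hη))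
        (fun x hx => hML x (hx.trans (hLlim.succ_lt hη)))
      exact ⟨b, fun _ => ⟨hb, h⟩⟩
    · exact ⟨0, fun h => (hη h).elim⟩
  choose M' hM' using hM'
  let good : Ordinal.{0} → Ordinal.{0} → Prop := fun β i =>
    i < κ.ord ∧ ∀ s < β, ∃ α < β, s < α ∧ R β (f α) < c i
  let h : Ordinal.{0} → Ordinal.{0} := fun β => if hh : ∃ i, good β i then hh.choose else 0
  have hhκ : ∀ β, h β < κ.ord := by
    intro β
    simp only [h]
    split_ifs with hh
    · exact hh.choose_spec.1
    · exact hκ0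
  refine ⟨h, fun α _ => hhκ α, ClP L M', ClP_club L hLa hLr M' (fun a ha => (hM' a ha).1), ?_⟩
  rintro δ ⟨hδS, hδE⟩
  have hδL : δ < L := hδE.1
  have hδM : δ ∈ ClP L M := ⟨hδL, hδE.2.1, fun η hη =>
    ((hM' η (hη.trans hδL)).2 η (Order.lt_succ η)).trans (hδE.2.2 η hη)⟩
  obtain ⟨hBm, hBlt, hBcof, hBcont⟩ := hB δ hδS
  have hs : ∀ i : Ordinal.{0}, ∃ s : Ordinal.{0}, ∀ hi : i < κ.ord, s < δ ∧ ∀ α < δ,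
      f α ∈ Set.range (w δ (Ordinal.ToType.mk ⟨i, hi⟩)) → α ≤ s := by
    intro i
    by_cases hi : i < κ.ord
    · obtain ⟨s, h1, h3⟩ := hmain δ hδS hδM (Ordinal.ToType.mk ⟨i, hi⟩)
      exact ⟨s, fun _ => ⟨h1, h3⟩⟩
    · exact ⟨0, fun h => (hi h).elim⟩
  choose s hs using hs
  have hm : ∀ η : Ordinal.{0}, ∃ ξ : Ordinal.{0}, η < κ.ord → ξ < κ.ord ∧ Order.succ η < ξ ∧
      h (B δ η) < ξ ∧ s η < B δ ξ ∧ M' (B δ η) < B δ ξ ∧ B δ η < B δ ξ := by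
    intro η
    by_cases hη : η < κ.ord
    · have hBη := hBlt η hη
      obtain ⟨ξ, hξ, hξ'⟩ := hBcof (max (s η) (max (M' (B δ η)) (B δ η)))
        (max_lt (hs η hη).1 (max_lt (hδE.2.2 _ hBη) hBη))
      refine ⟨max ξ (Order.succ (max (Order.succ η) (h (B δ η)))), fun _ => ⟨?_, ?_, ?_, ?_⟩⟩
      · exact max_lt hξ (hκlim.succ_lt (max_lt (hκlim.succ_lt hη) (hhκ _)))
      · exact lt_of_le_of_lt (le_max_left _ _) ((Order.lt_succ _).trans_le (le_max_right _ _))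
      · exact lt_of_le_of_lt (le_max_right _ _) ((Order.lt_succ _).trans_le (le_max_right _ _))
      · have := hξ'.trans_le (hBm (le_max_left ξ (Order.succ (max (Order.succ η) (h (B δ η))))))
        rw [max_lt_iff, max_lt_iff] at this
        exact this
    · exact ⟨0, fun h => (hη h).elim⟩
  choose m hm using hm
  have hDunb := ClP_unb κ.ord (by rwa [hκcof])
    (fun a ha => by rw [hκcof]; exact Cardinal.lt_ord.1 ha) m (fun a ha => (hm a ha).1)
  have fact1 : ∀ ε ∈ ClP κ.ord m, ∀ x < B δ ε, ∃ η < ε, x < B δ η := by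
    intro ε hε x hx
    obtain ⟨η, hη, hxη⟩ := hBcont ε x hx
    exact ⟨_, (hm η (hη.trans hε.1)).2.1.trans (hε.2.2 η hη), hxη⟩
  have fact3 : ∀ ε ∈ ClP κ.ord m, ∀ η < ε, B δ η < B δ ε := fun ε hε η hη =>
    (hm η (hη.trans hε.1)).2.2.2.2.2.trans_le (hBm (hε.2.2 η hη).le)
  have fact2 : ∀ ε ∈ ClP κ.ord m, ∀ α < B δ ε, f α < B δ ε := by
    intro ε hε α hα
    obtain ⟨η, hη, hαη⟩ := fact1 ε hε α hα
    have hηκ := hη.trans hε.1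
    have hBL : B δ η < L := (hBlt η hηκ).trans hδL
    calc f α < M α := hfM α (hαη.trans hBL)
      _ < M' (B δ η) := (hM' _ hBL).2 α (hαη.trans (Order.lt_succ _))
      _ < B δ (m η) := (hm η hηκ).2.2.2.2.1
      _ ≤ B δ ε := hBm (hε.2.2 η hη).le
  have fact4 : ∀ ε ∈ ClP κ.ord m, ε ≤ h (B δ ε) := by
    intro ε hε
    have hex : ∃ i, good (B δ ε) i := by
      obtain ⟨ζ, hζ, hζ'⟩ := bnd' ε (fun η => R (B δ ε) (f (B δ η))) χ.ord
        (by rw [hcofχ]; exact Cardinal.lt_ord.1 hε.1) (fun x _ => hR _ _)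
      obtain ⟨i, hi, hζi⟩ := hc2 ζ hζ
      refine ⟨i, hi, fun s hs => ?_⟩
      obtain ⟨η, hη, hsη⟩ := fact1 ε hε s hs
      exact ⟨B δ η, fact3 ε hε η hη, hsη, (hζ' η hη).trans_le hζi⟩
    have hheq : h (B δ ε) = hex.choose := by
      simp only [h, hex, dif_pos]
    obtain ⟨hiκ, hi⟩ : good (B δ ε) (h (B δ ε)) := by rw [hheq]; exact hex.choose_spec
    by_contra hlt
    push Not at hlt
    obtain ⟨α, hα, hsα, hRα⟩ := hi (s (h (B δ ε)))
      ((hm _ hiκ).2.2.2.1.trans_le (hBm (hε.2.2 _ hlt).le))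
    have h1 := hw δ hδS _ hiκ ε hε.1 (f α) (fact2 ε hε α hα) hRα
    have h3 := (hs _ hiκ).2 α (hα.trans (hBlt ε hε.1)) h1
    exact absurd hsα (not_lt.2 h3)
  refine ⟨B δ '' ClP κ.ord m, ⟨?_, ?_, ?_⟩, ?_⟩
  · rintro _ ⟨ε, hε, rfl⟩
    exact hBlt ε hε.1
  · intro a ha
    obtain ⟨ε0, h0, hlt⟩ := hBcof a ha
    obtain ⟨ε, hε, h1⟩ := hDunb ε0 h0
    exact ⟨_, ⟨ε, hε, rfl⟩, hlt.le.trans (hBm h1.le)⟩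
  · intro a ha hne hsup
    obtain ⟨ε0, h0, hlt0⟩ := hBcof a ha
    have hexε : ∃ ε, a ≤ B δ ε := ⟨ε0, hlt0.le⟩
    obtain ⟨ε, hεa, hmin⟩ : ∃ ε, a ≤ B δ ε ∧ ∀ η < ε, B δ η < a :=
      ⟨sInf {ε | a ≤ B δ ε}, csInf_mem (s := {ε | a ≤ B δ ε}) hexε, fun η hη =>
        not_le.1 (fun hle => notMem_of_lt_csInf' (s := {ε | a ≤ B δ ε}) hη hle)⟩
    have hεκ : ε < κ.ord := by
      refine lt_of_le_of_lt ?_ h0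
      by_contra hcon
      exact absurd (hmin ε0 (not_le.1 hcon)) (not_lt.2 hlt0.le)
    have hstep : ∀ x < a, ∃ ε' ∈ ClP κ.ord m, ε' < ε ∧ x < B δ ε' := by
      intro x hx
      rw [← hsup] at hx
      obtain ⟨_, ⟨⟨ε', hε', rfl⟩, hlt⟩, hx'⟩ := exists_lt_of_lt_csSup hne hx
      refine ⟨ε', hε', ?_, hx'⟩
      by_contra hcon
      exact absurd (hεa.trans (hBm (not_lt.1 hcon))) (not_le.2 hlt)
    have hapos : 0 < a := by
      obtain ⟨y, _, hy⟩ := hne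
      exact lt_of_le_of_lt bot_le hy
    have hεD : ε ∈ ClP κ.ord m := by
      refine ⟨hεκ, ?_, ?_⟩
      · obtain ⟨ε', _, hlt, _⟩ := hstep 0 hapos
        exact lt_of_le_of_lt bot_le hlt
      · intro η hη
        obtain ⟨ε', hε', hlt, hB'⟩ := hstep _ (hmin η hη)
        exact (hε'.2.2 η (hBm.reflect_lt hB')).trans hlt
    refine ⟨ε, hεD, le_antisymm ?_ hεa⟩
    by_contra hcon
    obtain ⟨η, hη, hlt⟩ := fact1 ε hεD a (not_le.1 hcon)
    exact absurd hlt (not_lt.2 (hmin η hη).le)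
  · rintro _ ⟨η, hη, rfl⟩ _ ⟨ε, hε, rfl⟩ hlt
    have hηε : η < ε := hBm.reflect_lt hlt
    calc h (B δ η) < m η := (hm η hη.1).2.2.1
      _ < ε := hε.2.2 η hηε
      _ ≤ h (B δ ε) := fact4 ε hε
end
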